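/- arXiv:2401.09357 — 2 statements merged into one kernel-verified Lean document; each statement's English description precedes it below -/
import Mathlib

section
/- Let α ∈ ℝ \ {0}, x₀ ∈ ℝ, and let W : ℝ → ℝ be continuous, compactly supported, nonnegative, with ∫_ℝ W(x) dx = 1. Set v_α(p) = α (2π)^{-1/2} e^{−ipx₀} and v_ε(p) = α · (2π)^{-1/2} ∫_ℝ ε⁻¹ W((x − x₀)/ε) e^{−ipx} dx for ε > 0. With K_{t,n}[·] the recursively defined Dyson kernels, for every n ≥ 1 and every t ∈ ℝ, the quantity sup_{p∈ℝ} ∫_ℝ |K_{t,n}[v_α](p,q) − K_{t,n}[v_ε](p,q)| dq converges to 0 as ε → 0⁺. -/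
open MeasureTheory Filter Topology

/-- The first-order Dyson kernel factor:
`φ_t(p,q) = (e^{it(p²−q²)} − 1)/(i(p²−q²))` if `p² ≠ q²`, and `t` otherwise. -/
noncomputable def phiK (t p q : ℝ) : ℂ :=
  if p ^ 2 = q ^ 2 then (t : ℂ)
  else (Complex.exp (Complex.I * t * ((p : ℂ) ^ 2 - (q : ℂ) ^ 2)) - 1) /
    (Complex.I * ((p : ℂ) ^ 2 - (q : ℂ) ^ 2))

/-- The Dyson expansion kernels: `dysonKernel v n` is the `(n+1)`-st kernel `K_{·,n+1}[v]`. -/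
noncomputable def dysonKernel (v : ℝ → ℂ) : ℕ → ℝ → ℝ → ℝ → ℂ
  | 0 => fun t p q => phiK t p q * v (p - q) / ((Real.sqrt (2 * Real.pi) : ℝ) : ℂ)
  | n + 1 => fun t p q =>
      ∫ s in (0 : ℝ)..t, ∫ z : ℝ,
        dysonKernel v n s p z * Complex.exp (Complex.I * s * ((z : ℂ) ^ 2 - (q : ℂ) ^ 2)) *
          v (z - q) / ((Real.sqrt (2 * Real.pi) : ℝ) : ℂ)

/-- The Fourier transform of the delta potential `α δ(· − x₀)`. -/
noncomputable def deltaFT (α x₀ p : ℝ) : ℂ :=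
  (α : ℂ) * ((Real.sqrt (2 * Real.pi) : ℝ) : ℂ)⁻¹ * Complex.exp (-Complex.I * p * x₀)

/-- `α` times the Fourier transform of the shifted mollifier `x ↦ W_ε(x − x₀)`. -/
noncomputable def mollPotFT (α : ℝ) (W : ℝ → ℝ) (x₀ ε p : ℝ) : ℂ :=
  (α : ℂ) * (((Real.sqrt (2 * Real.pi) : ℝ) : ℂ)⁻¹ *
    ∫ x : ℝ, ((ε⁻¹ * W ((x - x₀) / ε) : ℝ) : ℂ) * Complex.exp (-Complex.I * p * x))

noncomputable def ee (s a b : ℝ) : ℂ :=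
  Complex.exp (Complex.I * s * ((a : ℂ) ^ 2 - (b : ℂ) ^ 2))

noncomputable def KK (u : ℝ → ℂ) (p : ℝ) : ℕ → ℝ → ℝ → ℂ
  | 0 => fun t q => phiK t p q * u (p - q)
  | n + 1 => fun t q => ∫ s in (0 : ℝ)..t, ∫ z : ℝ, KK u p n s z * ee s z q * u (z - q)

noncomputable def JJ (u : ℝ → ℂ) (p : ℝ) (n : ℕ) (t y q : ℝ) : ℂ :=
  ∫ s in (0 : ℝ)..t, KK u p n s y * ee s y q

noncomputable def LL (u : ℝ → ℂ) (p : ℝ) : ℕ → ℝ → ℝ → ℝ → ℂ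
  | 0 => fun t z q => phiK t p q * u (p - z)
  | n + 1 => fun t z q => ∫ y : ℝ, JJ u p n t y q * u (y - z)

noncomputable def ww (x y : ℝ) : ENNReal := ENNReal.ofReal (1 + √|x - y|)
noncomputable def hh (x y : ℝ) : ENNReal := (ENNReal.ofReal (1 + |x ^ 2 - y ^ 2|))⁻¹

noncomputable def NN (p : ℝ) : ℕ → ℝ → ENNReal
  | 0 => fun q => hh p q * ww p q
  | n + 1 => fun q => ∫⁻ z : ℝ, hh z q * ww z q * (NN p n z + NN p n q)

lemma dyson_eq (v : ℝ → ℂ) (p : ℝ) (n : ℕ) : ∀ t q, dysonKernel v n t p q =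
    KK (fun k => v k / ((Real.sqrt (2 * Real.pi) : ℝ) : ℂ)) p n t q := by
  induction n with
  | zero => intro t q; simp [dysonKernel, KK, mul_div_assoc]
  | succ n ih => intro t q; simp only [dysonKernel, KK, ih, ee, mul_div_assoc]

lemma ee_norm (s a b : ℝ) : ‖ee s a b‖ = 1 := by
  unfold ee
  have : Complex.I * s * ((a : ℂ) ^ 2 - (b : ℂ) ^ 2) = ((s * (a ^ 2 - b ^ 2) : ℝ) : ℂ) * Complex.I := by
    push_cast; ring
  rw [this, Complex.norm_exp_ofReal_mul_I]

lemma ee_enorm (s a b : ℝ) : ‖ee s a b‖ₑ = 1 := by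
  rw [← ofReal_norm, ee_norm]; simp

lemma ee_cont : Continuous (fun x : ℝ × ℝ × ℝ => ee x.1 x.2.1 x.2.2) := by
  unfold ee; fun_prop

lemma ee_cont1 (a b : ℝ) : Continuous (fun s => ee s a b) := by
  unfold ee; fun_prop

lemma ee_mul (s a b c : ℝ) : ee s a b * ee s b c = ee s a c := by
  unfold ee; rw [← Complex.exp_add]; congr 1; ring

lemma ee_self (s a : ℝ) : ee s a a = 1 := by
  unfold ee; simp

lemma ee_deriv (a b s : ℝ) : HasDerivAt (fun s => ee s a b)
    (ee s a b * (Complex.I * ((a : ℂ) ^ 2 - (b : ℂ) ^ 2))) s := by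
  unfold ee
  have h : HasDerivAt (fun s : ℝ => Complex.I * s * ((a : ℂ) ^ 2 - (b : ℂ) ^ 2))
      (Complex.I * ((a : ℂ) ^ 2 - (b : ℂ) ^ 2)) s := by
    have := ((Complex.ofRealCLM.hasDerivAt (x := s)).const_mul Complex.I).mul_const
      ((a : ℂ) ^ 2 - (b : ℂ) ^ 2)
    simpa using this
  exact h.cexp

lemma scalar_ibp (f : ℝ → ℂ) (hf : Continuous f) (t a b : ℝ) :
    (∫ s in (0 : ℝ)..t, (∫ r in (0 : ℝ)..s, f r) * ee s a b) *
      (Complex.I * ((a : ℂ) ^ 2 - (b : ℂ) ^ 2)) =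
    (∫ r in (0 : ℝ)..t, f r) * ee t a b - ∫ s in (0 : ℝ)..t, f s * ee s a b := by
  rw [← intervalIntegral.integral_mul_const]
  have := intervalIntegral.integral_mul_deriv_eq_deriv_mul (a := 0) (b := t)
    (u := fun s => ∫ r in (0 : ℝ)..s, f r) (u' := f) (v := fun s => ee s a b)
    (v' := fun s => ee s a b * (Complex.I * ((a : ℂ) ^ 2 - (b : ℂ) ^ 2)))
    (fun x _ => intervalIntegral.integral_hasDerivAt_right (hf.intervalIntegrable _ _)
      (hf.stronglyMeasurableAtFilter _ _) hf.continuousAt) (fun x _ => ee_deriv a b x)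
    (hf.intervalIntegrable _ _) (((ee_cont1 a b).mul continuous_const).intervalIntegrable _ _)
  simpa [mul_assoc] using this

lemma phi_eq (t p q : ℝ) : phiK t p q = ∫ s in (0 : ℝ)..t, ee s p q := by
  by_cases h : p ^ 2 = q ^ 2
  · have h' : (p : ℂ) ^ 2 = (q : ℂ) ^ 2 := by exact_mod_cast h
    simp [phiK, h, ee, h']
  · have h' : (p : ℂ) ^ 2 - (q : ℂ) ^ 2 ≠ 0 := by
      rw [sub_ne_zero]; exact_mod_cast h
    have hne : (Complex.I * ((p : ℂ) ^ 2 - (q : ℂ) ^ 2)) ≠ 0 := mul_ne_zero Complex.I_ne_zero h'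
    have := intervalIntegral.integral_eq_sub_of_hasDerivAt (a := 0) (b := t)
      (fun x _ => ee_deriv p q x)
      (((ee_cont1 p q).mul continuous_const).intervalIntegrable _ _)
    rw [intervalIntegral.integral_mul_const] at this
    rw [phiK, if_neg h, div_eq_iff hne, this]
    simp [ee]

lemma phi_cont (p q : ℝ) : Continuous (fun t => phiK t p q) := by
  simp only [phi_eq]
  exact intervalIntegral.continuous_primitive (fun a b => (ee_cont1 p q).intervalIntegrable _ _) 0

lemma prim_meas {f : ℝ → ℝ → ℂ} (hf : Measurable (Function.uncurry f)) :
    Measurable (fun x : ℝ × ℝ => ∫ s in (0 : ℝ)..x.1, f s x.2) := by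
  have h : ∀ x : ℝ × ℝ, ∫ s in (0 : ℝ)..x.1, f s x.2 =
      x.1 • ∫ s in (0 : ℝ)..1, f (x.1 * s) x.2 := by
    intro x
    have := intervalIntegral.smul_integral_comp_mul_left (a := 0) (b := 1) (fun s => f s x.2) x.1
    simpa using this.symm
  simp only [h, intervalIntegral.integral_of_le zero_le_one]
  refine measurable_fst.smul ?_
  refine (StronglyMeasurable.integral_prod_right (f := fun (x : ℝ × ℝ) s => f (x.1 * s) x.2) ?_).measurable
  refine Measurable.stronglyMeasurable ?_
  exact hf.comp (f := fun y : (ℝ × ℝ) × ℝ => (y.1.1 * y.2, y.1.2)) (by fun_prop)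

lemma K0_meas {u : ℝ → ℂ} (hu : Measurable u) (p : ℝ) :
    Measurable (Function.uncurry (fun t q => phiK t p q * u (p - q))) := by
  refine Measurable.mul ?_ (hu.comp (f := fun x : ℝ × ℝ => p - x.2) (by fun_prop))
  simp only [phi_eq]
  exact prim_meas (f := fun s q => ee s p q) (by unfold ee Function.uncurry; fun_prop)

lemma K_meas {u : ℝ → ℂ} (hu : Measurable u) (p : ℝ) (n : ℕ) :
    Measurable (Function.uncurry (KK u p n)) := by
  induction n with
  | zero => exact K0_meas hu p
  | succ n ih =>
    refine prim_meas (f := fun s q => ∫ z : ℝ, KK u p n s z * ee s z q * u (z - q)) ?_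
    refine (StronglyMeasurable.integral_prod_right
      (f := fun (x : ℝ × ℝ) z => KK u p n x.1 z * ee x.1 z x.2 * u (z - x.2)) ?_).measurable
    refine Measurable.stronglyMeasurable ?_
    refine Measurable.mul (Measurable.mul ?_ ?_) ?_
    · exact ih.comp (f := fun y : (ℝ × ℝ) × ℝ => (y.1.1, y.2)) (by fun_prop)
    · unfold ee; fun_prop
    · exact hu.comp (by fun_prop)

lemma J_meas {u : ℝ → ℂ} (hu : Measurable u) (p : ℝ) (n : ℕ) (q : ℝ) :
    Measurable (Function.uncurry (fun t y => JJ u p n t y q)) := by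
  unfold JJ
  refine prim_meas (f := fun s y => KK u p n s y * ee s y q) ?_
  refine Measurable.mul (K_meas hu p n) ?_
  unfold ee; fun_prop

lemma ww_meas : Measurable (fun x : ℝ × ℝ => ww x.1 x.2) := by
  unfold ww; fun_prop
lemma hh_meas : Measurable (fun x : ℝ × ℝ => hh x.1 x.2) := by
  unfold hh; fun_prop

lemma N_meas (p : ℝ) (n : ℕ) : Measurable (NN p n) := by
  induction n with
  | zero =>
    exact (hh_meas.comp (measurable_const.prodMk measurable_id)).mul
      (ww_meas.comp (measurable_const.prodMk measurable_id))
  | succ n ih =>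
    refine Measurable.lintegral_prod_right' (f := fun x : ℝ × ℝ =>
      hh x.2 x.1 * ww x.2 x.1 * (NN p n x.2 + NN p n x.1)) ?_
    exact ((hh_meas.comp measurable_swap).mul (ww_meas.comp measurable_swap)).mul
      ((ih.comp measurable_snd).add (ih.comp measurable_fst))

open scoped NNReal ENNReal

noncomputable def cC (A T : ℝ≥0) : ℕ → ℝ≥0
  | 0 => A * ((T + 1) * 2)
  | n + 1 => A * ((T + 1) * cC A T n)

noncomputable def cD (A T : ℝ≥0) : ℕ → ℝ≥0
  | 0 => (T + 1) * 2
  | n + 1 => A * ((T + 1) * cD A T n) + (T + 1) * cC A T n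

lemma prod_integrable {f : ℝ → ℝ → ℂ} (hf : Measurable (Function.uncurry f)) {N : ℝ → ℝ≥0∞}
    {C : ℝ≥0∞} (hC : C ≠ ∞) (hN : Measurable N) (hN' : ∫⁻ y, N y ≠ ∞) (t : ℝ)
    (hb : ∀ s, |s| ≤ |t| → ∀ y, ‖f s y‖ₑ ≤ C * N y) :
    Integrable (Function.uncurry f) ((volume.restrict (Set.uIoc 0 t)).prod volume) := by
  refine ⟨hf.aestronglyMeasurable, ?_⟩
  rw [hasFiniteIntegral_iff_enorm, lintegral_prod _ hf.enorm.aemeasurable]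
  calc ∫⁻ s in Set.uIoc 0 t, ∫⁻ y, ‖f s y‖ₑ
      ≤ ∫⁻ s in Set.uIoc 0 t, C * ∫⁻ y, N y := by
        refine setLIntegral_mono measurable_const (fun s hs => ?_)
        rw [← lintegral_const_mul _ hN]
        refine lintegral_mono (fun y => hb s ?_ y)
        have := Set.abs_sub_left_of_mem_uIcc (Set.uIoc_subset_uIcc hs)
        simpa using this
    _ < ∞ := by
        rw [setLIntegral_const]
        refine ENNReal.mul_lt_top (ENNReal.mul_lt_top hC.lt_top hN'.lt_top) ?_
        simp [Set.uIoc]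

lemma ii_bound {f : ℝ → ℂ} {M : ℝ≥0∞} {T : ℝ≥0} {t : ℝ} (ht : |t| ≤ T)
    (hb : ∀ s : ℝ, |s| ≤ T → ‖f s‖ₑ ≤ M) : ‖∫ s in (0 : ℝ)..t, f s‖ₑ ≤ T * M := by
  have h1 : ‖∫ s in (0 : ℝ)..t, f s‖ₑ = ‖∫ s in Set.uIoc 0 t, f s‖ₑ := by
    rw [← ofReal_norm, ← ofReal_norm, intervalIntegral.norm_intervalIntegral_eq]
  rw [h1]
  calc _ ≤ ∫⁻ s in Set.uIoc 0 t, ‖f s‖ₑ := enorm_integral_le_lintegral_enorm _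
    _ ≤ ∫⁻ s in Set.uIoc 0 t, M := by
        refine setLIntegral_mono measurable_const (fun s hs => hb s ?_)
        have := Set.abs_sub_left_of_mem_uIcc (Set.uIoc_subset_uIcc hs)
        refine le_trans ?_ ht
        simpa using this
    _ ≤ T * M := by
        rw [setLIntegral_const, mul_comm]
        gcongr
        have : volume (Set.uIoc 0 t) = ENNReal.ofReal |t| := by
          rw [Set.uIoc, Real.volume_Ioc, max_sub_min_eq_abs']; simp
        rw [this]
        exact ENNReal.ofReal_le_of_le_toReal (by simpa using ht)

lemma J_alg {J : ℂ} {z q : ℝ} {T : ℝ≥0} {a b : ℝ≥0∞} (h1 : ‖J‖ₑ ≤ T * a)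
    (h2 : ‖J * (Complex.I * ((z : ℂ) ^ 2 - (q : ℂ) ^ 2))‖ₑ ≤ a + b) :
    ‖J‖ₑ ≤ hh z q * ((T + 1) * (a + b)) := by
  have h3 : ‖Complex.I * ((z : ℂ) ^ 2 - (q : ℂ) ^ 2)‖ₑ = ENNReal.ofReal |z ^ 2 - q ^ 2| := by
    rw [← ofReal_norm, norm_mul, Complex.norm_I, one_mul]
    congr 1
    rw [← Complex.ofReal_pow, ← Complex.ofReal_pow, ← Complex.ofReal_sub, Complex.norm_real]
    rfl
  rw [enorm_mul, h3] at h2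
  unfold hh
  rw [← ENNReal.div_eq_inv_mul, ENNReal.le_div_iff_mul_le (Or.inl (by simp; positivity)) (Or.inl (by simp)),
    ENNReal.ofReal_add zero_le_one (abs_nonneg _), mul_add, ENNReal.ofReal_one, mul_one]
  calc _ ≤ T * a + (a + b) := add_le_add h1 h2
    _ ≤ T * (a + b) + (a + b) := by gcongr; exact le_self_add
    _ = _ := by ring

lemma phi_mul (t p q : ℝ) : phiK t p q * (Complex.I * ((p : ℂ) ^ 2 - (q : ℂ) ^ 2)) =
    ee t p q - 1 := by
  rw [phi_eq, ← intervalIntegral.integral_mul_const,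
    intervalIntegral.integral_eq_sub_of_hasDerivAt (a := 0) (b := t)
      (fun x _ => ee_deriv p q x) (((ee_cont1 p q).mul continuous_const).intervalIntegrable _ _)]
  simp [ee]

lemma phi_bound {T : ℝ≥0} {t : ℝ} (ht : |t| ≤ T) (p q : ℝ) :
    ‖phiK t p q‖ₑ ≤ hh p q * ((T + 1) * 2) := by
  have := J_alg (J := phiK t p q) (z := p) (q := q) (T := T) (a := 1) (b := 1) ?_ ?_
  · rwa [one_add_one_eq_two] at this
  · rw [phi_eq]
    exact ii_bound ht (fun s _ => (ee_enorm s p q).le)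
  · rw [phi_mul]
    exact (enorm_sub_le).trans (by simp [ee_enorm])

lemma one_le_ww (x y : ℝ) : 1 ≤ ww x y := by
  unfold ww; simp

lemma ww_tri (x y z : ℝ) : ww x z ≤ ww x y * ww y z := by
  unfold ww
  rw [← ENNReal.ofReal_mul (by positivity)]
  apply ENNReal.ofReal_le_ofReal
  have h : √|x - z| ≤ √|x - y| + √|y - z| := by
    have h1 : |x - z| ≤ |x - y| + |y - z| := abs_sub_le _ _ _
    refine Real.sqrt_le_iff.2 ⟨by positivity, ?_⟩
    have h2 := Real.sq_sqrt (abs_nonneg (x - y))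
    have h3 := Real.sq_sqrt (abs_nonneg (y - z))
    have : 0 ≤ √|x - y| * √|y - z| := by positivity
    nlinarith
  have : 0 ≤ √|x - y| * √|y - z| := by positivity
  nlinarith

lemma ww_comm (x y : ℝ) : ww x y = ww y x := by
  unfold ww; rw [abs_sub_comm]

lemma hh_comm (x y : ℝ) : hh x y = hh y x := by
  unfold hh; rw [abs_sub_comm]

lemma ww_self (x : ℝ) : ww x x = 1 := by
  unfold ww; simp

/-- induction package -/
structure PP (u : ℝ → ℂ) (p : ℝ) (A : ℝ≥0) (n : ℕ) : Prop where
  diag : ∀ t z, KK u p n t z = LL u p n t z z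
  cont : ∀ z, Continuous fun t => KK u p n t z
  ibp : ∀ t z q, JJ u p n t z q * (Complex.I * ((z : ℂ) ^ 2 - (q : ℂ) ^ 2)) =
    LL u p n t z z * ee t z q - LL u p n t z q
  bd : ∀ T : ℝ≥0, ∀ s z q : ℝ, |s| ≤ T → ‖LL u p n s z q‖ₑ ≤ cC A T n * NN p n q

lemma PP.Kbd {u : ℝ → ℂ} {p : ℝ} {A : ℝ≥0} {n : ℕ} (h : PP u p A n) {T : ℝ≥0} {s : ℝ}
    (hs : |s| ≤ T) (z : ℝ) : ‖KK u p n s z‖ₑ ≤ cC A T n * NN p n z := by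
  rw [h.diag]; exact h.bd T s z z hs

lemma PP.Jbd0 {u : ℝ → ℂ} {p : ℝ} {A : ℝ≥0} {n : ℕ} (h : PP u p A n) {T : ℝ≥0} {t : ℝ}
    (hs : |t| ≤ T) (y q : ℝ) : ‖JJ u p n t y q‖ₑ ≤ T * (cC A T n * NN p n y) := by
  refine ii_bound hs (fun s hs => ?_)
  rw [enorm_mul, ee_enorm, mul_one]
  exact h.Kbd hs y

lemma PP.Jbd {u : ℝ → ℂ} {p : ℝ} {A : ℝ≥0} {n : ℕ} (h : PP u p A n) {T : ℝ≥0} {t : ℝ}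
    (hs : |t| ≤ T) (y q : ℝ) : ‖JJ u p n t y q‖ₑ ≤
      hh y q * ((T + 1) * (cC A T n * NN p n y + cC A T n * NN p n q)) := by
  refine J_alg (h.Jbd0 hs y q) ?_
  rw [h.ibp]
  refine enorm_sub_le.trans (add_le_add ?_ (h.bd T t y q hs))
  rw [enorm_mul, ee_enorm, mul_one]
  exact h.bd T t y y hs

lemma PP.zero {u : ℝ → ℂ} {p : ℝ} {A : ℝ≥0} (hA : ∀ k, ‖u k‖ₑ ≤ A) : PP u p A 0 where
  diag t z := rfl
  cont z := (phi_cont p z).mul continuous_const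
  ibp t z q := by
    have := scalar_ibp (fun s => ee s p z) (ee_cont1 p z) t z q
    simp only [← phi_eq, ee_mul] at this
    simp only [JJ, KK, LL]
    have e : ∀ s, phiK s p z * u (p - z) * ee s z q = phiK s p z * ee s z q * u (p - z) :=
      fun s => by ring
    simp only [e, intervalIntegral.integral_mul_const]
    rw [mul_right_comm, this]; ring
  bd T s z q hs := by
    simp only [LL, NN, cC]
    rw [enorm_mul]
    calc _ ≤ (hh p q * ((T + 1) * 2)) * A := mul_le_mul' (phi_bound hs p q) (hA _)
      _ = (A * ((T + 1) * 2)) * (hh p q * 1) := by ring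
      _ ≤ _ := by
        push_cast
        gcongr; exact one_le_ww p q

lemma PP.succ {u : ℝ → ℂ} (hu : Measurable u) {p : ℝ} {A : ℝ≥0} (hA : ∀ k, ‖u k‖ₑ ≤ A)
    {n : ℕ} (h : PP u p A n) (hN : ∫⁻ y, NN p n y ≠ ∞) : PP u p A (n + 1) where
  diag t z := by
    simp only [KK, LL]
    rw [intervalIntegral_integral_swap]
    · simp only [intervalIntegral.integral_mul_const, JJ]
    · refine prod_integrable (C := cC A (Real.nnabs t) n * A) (N := NN p n) ?_ (by finiteness)
        (N_meas p n) hN t ?_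
      · refine Measurable.mul (Measurable.mul (K_meas hu p n) ?_) ?_
        · unfold ee; fun_prop
        · exact hu.comp (f := fun x : ℝ × ℝ => x.2 - z) (by fun_prop)
      · intro s hs y
        rw [enorm_mul, enorm_mul, ee_enorm, mul_one, mul_right_comm]
        exact mul_le_mul' (h.Kbd (by simpa using hs) y) (hA _)
  cont z := by
    refine intervalIntegral.continuous_primitive (fun a b => ?_) 0
    have hm : StronglyMeasurable (fun s => ∫ y, KK u p n s y * ee s y z * u (y - z)) := by
      refine StronglyMeasurable.integral_prod_right
        (f := fun s y => KK u p n s y * ee s y z * u (y - z)) ?_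
      refine Measurable.stronglyMeasurable ?_
      refine Measurable.mul (Measurable.mul (K_meas hu p n) ?_) ?_
      · unfold ee; fun_prop
      · exact hu.comp (f := fun x : ℝ × ℝ => x.2 - z) (by fun_prop)
    rw [intervalIntegrable_iff]
    set T : ℝ≥0 := Real.nnabs a + Real.nnabs b with hT
    set M : ℝ≥0∞ := cC A T n * A * ∫⁻ y, NN p n y with hM
    have hMt : M ≠ ∞ := by finiteness
    refine Measure.integrableOn_of_bounded (M := M.toReal) (by simp [Set.uIoc])
      hm.aestronglyMeasurable ?_
    filter_upwards [ae_restrict_mem measurableSet_uIoc] with s hs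
    have hs' : |s| ≤ T := by
      have h1 := Set.uIoc_subset_uIcc hs
      rw [Set.mem_uIcc] at h1
      simp only [hT, NNReal.coe_add, Real.coe_nnabs]
      have h2 := abs_nonneg a
      have h3 := abs_nonneg b
      have h4 := neg_abs_le a
      have h5 := neg_abs_le b
      have h6 := le_abs_self a
      have h7 := le_abs_self b
      rw [abs_le]
      rcases h1 with h1 | h1 <;> constructor <;> linarith [h1.1, h1.2]
    have : ‖∫ y, KK u p n s y * ee s y z * u (y - z)‖ₑ ≤ M := by
      refine (enorm_integral_le_lintegral_enorm _).trans ?_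
      rw [hM, ← lintegral_const_mul _ (N_meas p n)]
      refine lintegral_mono (fun y => ?_)
      rw [enorm_mul, enorm_mul, ee_enorm, mul_one, mul_right_comm]
      exact mul_le_mul' (h.Kbd hs' y) (hA _)
    rw [← toReal_enorm]
    exact ENNReal.toReal_mono hMt this
  ibp t z q := by
    have hd : ∀ s, KK u p (n + 1) s z = ∫ y, JJ u p n s y z * u (y - z) := by
      intro s
      simp only [KK]
      rw [intervalIntegral_integral_swap]
      · simp only [intervalIntegral.integral_mul_const, JJ]
      · refine prod_integrable (C := cC A (Real.nnabs s) n * A) (N := NN p n) ?_ (by finiteness)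
          (N_meas p n) hN s ?_
        · refine Measurable.mul (Measurable.mul (K_meas hu p n) ?_) ?_
          · unfold ee; fun_prop
          · exact hu.comp (f := fun x : ℝ × ℝ => x.2 - z) (by fun_prop)
        · intro s hs y
          rw [enorm_mul, enorm_mul, ee_enorm, mul_one, mul_right_comm]
          exact mul_le_mul' (h.Kbd (by simpa using hs) y) (hA _)
    have hJi : ∀ x, Integrable (fun y => JJ u p n t y x * u (y - z)) := by
      intro x
      refine ⟨((Measurable.of_uncurry_left (J_meas hu p n x)).mul (hu.comp (f := fun y : ℝ => y - z)
        (by fun_prop))).aestronglyMeasurable, ?_⟩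
      rw [hasFiniteIntegral_iff_enorm]
      calc _ ≤ ∫⁻ y, (Real.nnabs t * (cC A (Real.nnabs t) n)) * A * NN p n y := by
            refine lintegral_mono (fun y => ?_)
            rw [enorm_mul, mul_right_comm, mul_assoc (Real.nnabs t : ℝ≥0∞)]
            exact mul_le_mul' (h.Jbd0 (by simp) y x) (hA _)
        _ < ∞ := by
            rw [lintegral_const_mul _ (N_meas p n)]
            exact lt_top_iff_ne_top.2 (by finiteness)
    have e1 : JJ u p (n + 1) t z q = ∫ y, (∫ s in (0 : ℝ)..t, JJ u p n s y z * ee s z q) * u (y - z) := by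
      rw [JJ]
      simp only [hd, ← integral_mul_const]
      rw [intervalIntegral_integral_swap]
      · simp only [← intervalIntegral.integral_mul_const]
        congr! 4; ring
      · refine prod_integrable (C := Real.nnabs t * cC A (Real.nnabs t) n * A) (N := NN p n) ?_ (by finiteness)
          (N_meas p n) hN t ?_
        · refine Measurable.mul (Measurable.mul (J_meas hu p n z) ?_) ?_
          · exact hu.comp (f := fun x : ℝ × ℝ => x.2 - z) (by fun_prop)
          · unfold ee; fun_prop
        · intro s hs y
          rw [enorm_mul, enorm_mul, ee_enorm, mul_one, mul_right_comm, mul_assoc (Real.nnabs t : ℝ≥0∞)]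
          exact mul_le_mul' (h.Jbd0 (by simpa using hs) y z) (hA _)
    rw [e1, ← integral_mul_const]
    simp only [LL]
    rw [← integral_mul_const, ← integral_sub ((hJi z).mul_const _) (hJi q)]
    congr 1; ext y
    have := scalar_ibp (fun r => KK u p n r y * ee r y z) ((h.cont y).mul (ee_cont1 y z)) t z q
    simp only [mul_assoc, ee_mul] at this
    simp only [JJ]
    rw [mul_right_comm, this]; ring
  bd T s z q hs := by
    simp only [LL, NN, cC]
    refine (enorm_integral_le_lintegral_enorm _).trans ?_
    rw [← lintegral_const_mul' _ _ (by finiteness)]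
    refine lintegral_mono (fun y => ?_)
    rw [enorm_mul]
    calc _ ≤ (hh y q * ((T + 1) * (cC A T n * NN p n y + cC A T n * NN p n q))) * A :=
          mul_le_mul' (h.Jbd hs y q) (hA _)
      _ = A * ((T + 1) * cC A T n) * (hh y q * 1 * (NN p n y + NN p n q)) := by ring
      _ ≤ _ := by
        push_cast
        gcongr; exact one_le_ww y q

lemma PP.all {u : ℝ → ℂ} (hu : Measurable u) {p : ℝ} {A : ℝ≥0} (hA : ∀ k, ‖u k‖ₑ ≤ A)
    (hN : ∀ n, ∫⁻ y, NN p n y ≠ ∞) (n : ℕ) : PP u p A n := by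
  induction n with
  | zero => exact PP.zero hA
  | succ n ih => exact ih.succ hu hA (hN n)

lemma J_integrable {u v : ℝ → ℂ} (hu : Measurable u) (hv : Measurable v) {p : ℝ} {A : ℝ≥0}
    (hA : ∀ k, ‖v k‖ₑ ≤ A)
    {n : ℕ} (h : PP u p A n) (hN : ∫⁻ y, NN p n y ≠ ∞) (t x z : ℝ) :
    Integrable (fun y => JJ u p n t y x * v (y - z)) := by
  refine ⟨((Measurable.of_uncurry_left (J_meas hu p n x)).mul (hv.comp (f := fun y : ℝ => y - z)
    (by fun_prop))).aestronglyMeasurable, ?_⟩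
  rw [hasFiniteIntegral_iff_enorm]
  calc _ ≤ ∫⁻ y, (Real.nnabs t * (cC A (Real.nnabs t) n)) * A * NN p n y := by
        refine lintegral_mono (fun y => ?_)
        rw [enorm_mul, mul_right_comm, mul_assoc (Real.nnabs t : ℝ≥0∞)]
        exact mul_le_mul' (h.Jbd0 (by simp) y x) (hA _)
    _ < ∞ := by
        rw [lintegral_const_mul _ (N_meas p n)]
        exact lt_top_iff_ne_top.2 (by finiteness)

lemma diff_bd {u v : ℝ → ℂ} (hu : Measurable u) (hv : Measurable v) {p : ℝ} {A δ : ℝ≥0}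
    (hA : ∀ k, ‖u k‖ₑ ≤ A) (hA' : ∀ k, ‖v k‖ₑ ≤ A)
    (hδ : ∀ x y, ‖u (x - y) - v (x - y)‖ₑ ≤ δ * ww x y)
    (hN : ∀ n, ∫⁻ y, NN p n y ≠ ∞) (T : ℝ≥0) (n : ℕ) : ∀ s z q : ℝ, |s| ≤ T →
    ‖LL u p n s z q - LL v p n s z q‖ₑ ≤ δ * ww q z * (cD A T n * NN p n q) := by
  induction n with
  | zero =>
    intro s z q hs
    simp only [LL, NN, cD]
    rw [← mul_sub, enorm_mul]
    calc _ ≤ (hh p q * ((T + 1) * 2)) * (δ * (ww p q * ww q z)) :=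
          mul_le_mul' (phi_bound hs p q) ((hδ _ _).trans (by gcongr; exact ww_tri _ _ _))
      _ = _ := by push_cast; ring
  | succ n ih =>
    intro s z q hs
    have hPu := PP.all hu hA hN n
    have hPv := PP.all hv hA' hN n
    have hJ : ∀ y, ‖JJ u p n s y q - JJ v p n s y q‖ₑ ≤ hh y q * ((T + 1) *
        (δ * ww y q * (cD A T n * NN p n y) + δ * ww y q * (cD A T n * NN p n q))) := by
      intro y
      have hK : ∀ s : ℝ, |s| ≤ T → ‖LL u p n s y y - LL v p n s y y‖ₑ ≤
          δ * ww y q * (cD A T n * NN p n y) := by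
        intro s hs
        refine (ih s y y hs).trans ?_
        rw [ww_self]; gcongr; exact one_le_ww _ _
      refine J_alg ?_ ?_
      · simp only [JJ]
        rw [← intervalIntegral.integral_sub]
        · refine ii_bound hs (fun s hs => ?_)
          rw [← sub_mul, enorm_mul, ee_enorm, mul_one, hPu.diag, hPv.diag]
          exact hK s hs
        · exact ((hPu.cont y).mul (ee_cont1 y q)).intervalIntegrable _ _
        · exact ((hPv.cont y).mul (ee_cont1 y q)).intervalIntegrable _ _
      · rw [sub_mul, hPu.ibp, hPv.ibp]
        have : LL u p n s y y * ee s y q - LL u p n s y q - (LL v p n s y y * ee s y q - LL v p n s y q)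
          = (LL u p n s y y - LL v p n s y y) * ee s y q - (LL u p n s y q - LL v p n s y q) := by ring
        rw [this]
        refine enorm_sub_le.trans (add_le_add ?_ ?_)
        · rw [enorm_mul, ee_enorm, mul_one]; exact hK s hs
        · rw [ww_comm y q]; exact ih s y q hs
    simp only [LL, NN, cD]
    rw [← integral_sub (J_integrable hu hu hA hPu (hN n) s q z)
      (J_integrable hv hv hA' hPv (hN n) s q z)]
    refine (enorm_integral_le_lintegral_enorm _).trans ?_
    rw [← mul_assoc, ← lintegral_const_mul' _ _ (by unfold ww; finiteness)]
    refine lintegral_mono (fun y => ?_)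
    have e : JJ u p n s y q * u (y - z) - JJ v p n s y q * v (y - z) =
      (JJ u p n s y q - JJ v p n s y q) * u (y - z) + JJ v p n s y q * (u (y - z) - v (y - z)) := by
      ring
    simp only []
    rw [e]
    refine (enorm_add_le _ _).trans ?_
    rw [enorm_mul, enorm_mul]
    calc _ ≤ (hh y q * ((T + 1) *
          (δ * ww y q * (cD A T n * NN p n y) + δ * ww y q * (cD A T n * NN p n q)))) * A * ww q z +
          (hh y q * ((T + 1) * (cC A T n * NN p n y + cC A T n * NN p n q))) *
            (δ * (ww y q * ww q z)) := by
          refine add_le_add ?_ ?_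
          · refine le_trans (mul_le_mul' (hJ y) (hA _)) ?_
            exact le_mul_of_one_le_right' (one_le_ww _ _)
          · exact mul_le_mul' (hPv.Jbd hs y q) ((hδ _ _).trans (by gcongr; exact ww_tri _ _ _))
      _ = _ := by push_cast; ring

lemma real_ineq {a b : ℝ} (ha : 0 ≤ a) (hb : 0 ≤ b) (h : b ≤ a) :
    b * (1 + b ^ 2) * (1 + a) ≤ 4 * (1 + a ^ 2 * b ^ 2) := by
  have hab : b ^ 2 ≤ a * b := by nlinarith
  have h0 : 0 ≤ a * b := by positivity
  rcases le_total b 1 with h1 | h1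
  · have : b * (1 + b ^ 2) * (1 + a) ≤ 2 * (b * (1 + a)) := by
      have h2 : 0 ≤ b * (1 + a) := by positivity
      have h3 : 1 + b ^ 2 ≤ 2 := by nlinarith
      calc b * (1 + b ^ 2) * (1 + a) = (1 + b ^ 2) * (b * (1 + a)) := by ring
        _ ≤ _ := by gcongr
    nlinarith [sq_nonneg (a * b - 1)]
  · have e1 : b * (1 + b ^ 2) ≤ b * (2 * b ^ 2) := by gcongr; nlinarith
    have e2 : 1 + a ≤ 2 * a := by linarith
    calc b * (1 + b ^ 2) * (1 + a) ≤ (b * (2 * b ^ 2)) * (2 * a) := by gcongr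
      _ = 4 * ((a * b) * b ^ 2) := by ring
      _ ≤ 4 * ((a * b) * (a * b)) := by gcongr
      _ ≤ _ := by nlinarith

noncomputable def gg (b : ℝ) : ℝ := 4 * (1 / (√|b| * (1 + |b|)))

lemma real_ineq2 {a b : ℝ} (ha : 0 < a) (hb : 0 < b) (h : b ≤ a) :
    (1 + √a) / (1 + a * b) ≤ gg b := by
  unfold gg
  rw [abs_of_pos hb, mul_one_div, div_le_div_iff₀ (by positivity) (by positivity)]
  have := real_ineq (Real.sqrt_nonneg a) (Real.sqrt_nonneg b) (Real.sqrt_le_sqrt h)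
  rw [Real.sq_sqrt ha.le, Real.sq_sqrt hb.le] at this
  linarith

lemma real_ineq3 {a b : ℝ} (ha : 0 < a) (hb : 0 < b) :
    (1 + √a) / (1 + a * b) ≤ gg a + gg b := by
  have h1 : ∀ b, 0 ≤ gg b := fun b => by unfold gg; positivity
  rcases le_total b a with h | h
  · exact (real_ineq2 ha hb h).trans (by linarith [h1 a])
  · have := real_ineq2 hb ha h
    refine le_trans ?_ (this.trans (by linarith [h1 b]))
    rw [mul_comm b a]
    gcongr

lemma gg_Ioi : IntegrableOn gg (Set.Ioi 0) := by
  have h := integrableOn_Ioi_deriv_of_nonneg (a := 0) (g := fun x => 2 * Real.arctan (√x))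
    (g' := fun x => 1 / (√x * (1 + x))) (l := 2 * (Real.pi / 2)) ?_ ?_ ?_ ?_
  · have h4 := h.const_mul 4
    refine IntegrableOn.congr_fun h4 (fun x hx => ?_) measurableSet_Ioi
    simp [gg, abs_of_pos (show (0:ℝ) < x from hx)]
  · exact (by fun_prop : Continuous fun x => 2 * Real.arctan (√x)).continuousWithinAt
  · intro x hx
    have hx : (0 : ℝ) < x := hx
    have h := ((Real.hasDerivAt_sqrt hx.ne').arctan).const_mul 2
    rw [Real.sq_sqrt hx.le] at h
    have e : 2 * (1 / (1 + x) * (1 / (2 * √x))) = 1 / (√x * (1 + x)) := by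
      have : 0 < √x := Real.sqrt_pos.2 hx
      field_simp
    rw [e] at h
    exact h
  · intro x hx
    have hx : (0 : ℝ) < x := hx
    positivity
  · exact ((Real.tendsto_arctan_atTop.mono_right nhdsWithin_le_nhds).comp
      Real.tendsto_sqrt_atTop).const_mul 2

lemma gg_int : Integrable gg := by
  have h0 : Integrable (Set.indicator (Set.Ioi 0) gg) := gg_Ioi.integrable_indicator measurableSet_Ioi
  have h1 := h0.add h0.comp_neg
  refine h1.congr (Eventually.of_forall fun x => ?_)
  simp only [Pi.add_apply, Set.indicator_apply, Set.mem_Ioi]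
  rcases lt_trichotomy x 0 with h | h | h
  · rw [if_neg (by linarith), if_pos (by linarith), zero_add]
    simp [gg]
  · subst h; simp [gg]
  · rw [if_pos h, if_neg (by linarith), add_zero]

lemma H_bound : ∃ S : ℝ≥0, ∀ x, ∫⁻ y, hh y x * ww y x ≤ S := by
  have hfin : ∫⁻ y, ENNReal.ofReal (gg y) ≠ ∞ := by
    have := gg_int.lintegral_lt_top
    exact this.ne
  refine ⟨(2 * ∫⁻ y, ENNReal.ofReal (gg y)).toNNReal, fun x => ?_⟩
  rw [ENNReal.coe_toNNReal (by finiteness)]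
  have hgm : Measurable gg := by unfold gg; fun_prop
  calc ∫⁻ y, hh y x * ww y x
      ≤ ∫⁻ y, (ENNReal.ofReal (gg (y - x)) + ENNReal.ofReal (gg (y + x))) := by
        refine lintegral_mono_ae ?_
        have h1 : ∀ᵐ y : ℝ, y ≠ x := by simp [ae_iff]
        have h2 : ∀ᵐ y : ℝ, y ≠ -x := by simp [ae_iff]
        filter_upwards [h1, h2] with y hy1 hy2
        unfold hh ww
        rw [← ENNReal.ofReal_inv_of_pos (by positivity), ← ENNReal.ofReal_mul (by positivity),
          ← ENNReal.ofReal_add (by unfold gg; positivity) (by unfold gg; positivity)]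
        apply ENNReal.ofReal_le_ofReal
        have e := real_ineq3 (a := |y - x|) (b := |y + x|) (abs_pos.2 (sub_ne_zero.2 hy1))
          (abs_pos.2 (by intro h; apply hy2; linarith))
        have e2 : |y ^ 2 - x ^ 2| = |y - x| * |y + x| := by rw [← abs_mul]; congr 1; ring
        rw [e2, mul_comm, ← div_eq_mul_inv]
        refine e.trans (le_of_eq ?_)
        simp [gg]
    _ = 2 * ∫⁻ y, ENNReal.ofReal (gg y) := by
        rw [lintegral_add_left (by fun_prop),
          lintegral_sub_right_eq_self (fun y => ENNReal.ofReal (gg y)) x,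
          lintegral_add_right_eq_self (fun y => ENNReal.ofReal (gg y)) x, two_mul]

lemma N_bound : ∀ n, ∃ S : ℝ≥0, ∀ p, ∫⁻ q, NN p n q ≤ S := by
  obtain ⟨S, hS⟩ := H_bound
  intro n
  induction n with
  | zero =>
    refine ⟨S, fun p => ?_⟩
    simp only [NN]
    refine le_trans (le_of_eq ?_) (hS p)
    congr 1; ext y; rw [hh_comm, ww_comm]
  | succ n ih =>
    obtain ⟨M, hM⟩ := ih
    refine ⟨2 * S * M, fun p => ?_⟩
    simp only [NN, mul_add]
    have hHm : Measurable (fun x : ℝ × ℝ => hh x.2 x.1 * ww x.2 x.1) :=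
      (hh_meas.comp measurable_swap).mul (ww_meas.comp measurable_swap)
    have hm1 : Measurable (fun x : ℝ × ℝ => hh x.2 x.1 * ww x.2 x.1 * NN p n x.2) :=
      hHm.mul ((N_meas p n).comp measurable_snd)
    have hm2 : Measurable (fun x : ℝ × ℝ => hh x.2 x.1 * ww x.2 x.1 * NN p n x.1) :=
      hHm.mul ((N_meas p n).comp measurable_fst)
    have hs1 : ∀ z, Measurable (fun x => hh z x * ww z x) := by
      intro z; unfold hh ww; fun_prop
    have hs2 : ∀ z, Measurable (fun x => hh x z * ww x z) := by
      intro z; unfold hh ww; fun_prop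
    have e : ∀ q, ∫⁻ z, (hh z q * ww z q * NN p n z + hh z q * ww z q * NN p n q) =
        (∫⁻ z, hh z q * ww z q * NN p n z) + ∫⁻ z, hh z q * ww z q * NN p n q := by
      intro q
      exact lintegral_add_left ((hs2 q).mul (N_meas p n)) _
    simp only [e]
    rw [lintegral_add_left (Measurable.lintegral_prod_right' hm1)]
    have b1 : ∫⁻ q, ∫⁻ z, hh z q * ww z q * NN p n z ≤ S * M := by
      rw [lintegral_lintegral_swap (f := fun q z => hh z q * ww z q * NN p n z) hm1.aemeasurable]
      calc _ ≤ ∫⁻ z, S * NN p n z := by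
            refine lintegral_mono (fun z => ?_)
            simp only []
            rw [lintegral_mul_const (f := fun x => hh z x * ww z x) _
              (hs1 z)]
            gcongr
            refine le_trans (le_of_eq ?_) (hS z)
            congr 1; ext y; rw [hh_comm, ww_comm]
        _ ≤ S * M := by rw [lintegral_const_mul _ (N_meas p n)]; gcongr; exact hM p
    have b2 : ∫⁻ q, ∫⁻ z, hh z q * ww z q * NN p n q ≤ S * M := by
      calc _ ≤ ∫⁻ z, S * NN p n z := by
            refine lintegral_mono (fun q => ?_)
            simp only []
            rw [lintegral_mul_const (f := fun x => hh x q * ww x q) _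
              (hs2 q)]
            gcongr
            exact hS q
        _ ≤ S * M := by rw [lintegral_const_mul _ (N_meas p n)]; gcongr; exact hM p
    refine (add_le_add b1 b2).trans (le_of_eq ?_)
    push_cast; ring

lemma moll_eq (α : ℝ) (W : ℝ → ℝ) (x₀ ε p : ℝ) (hε : 0 < ε) :
    mollPotFT α W x₀ ε p = (α : ℂ) * (((Real.sqrt (2 * Real.pi) : ℝ) : ℂ)⁻¹ *
    ∫ y : ℝ, (W y : ℂ) * Complex.exp (-Complex.I * p * (x₀ + ε * y : ℝ))) := by
  unfold mollPotFT
  congr 2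
  set F : ℝ → ℂ := fun y => ((ε⁻¹ : ℝ) : ℂ) * ((W y : ℂ) * Complex.exp (-Complex.I * p * (x₀ + ε * y : ℝ)))
  have e : ∀ x : ℝ, ((ε⁻¹ * W ((x - x₀) / ε) : ℝ) : ℂ) * Complex.exp (-Complex.I * p * x) =
      F ((x - x₀) / ε) := by
    intro x
    have : x₀ + ε * ((x - x₀) / ε) = x := by field_simp; ring
    simp only [F, this]; push_cast; ring
  simp only [e]
  rw [integral_sub_right_eq_self (fun x => F (x / ε)) x₀, Measure.integral_comp_div]
  simp only [F]
  rw [integral_const_mul, abs_of_pos hε, Complex.real_smul, ← mul_assoc]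
  have : (ε : ℂ) * ((ε⁻¹ : ℝ) : ℂ) = 1 := by
    rw [← Complex.ofReal_mul, mul_inv_cancel₀ hε.ne']; simp
  rw [this, one_mul]

lemma exp_norm1 (p x : ℝ) : ‖Complex.exp (-Complex.I * p * x)‖ = 1 := by
  have : -Complex.I * p * x = ((-(p * x) : ℝ) : ℂ) * Complex.I := by push_cast; ring
  rw [this, Complex.norm_exp_ofReal_mul_I]

lemma exp_diff (k x y : ℝ) : ‖Complex.exp (-Complex.I * k * x) - Complex.exp (-Complex.I * k * y)‖
    ≤ 2 * √(|k| * |x - y|) := by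
  have h1 : ‖Complex.exp (-Complex.I * k * x) - Complex.exp (-Complex.I * k * y)‖ ≤ 2 := by
    refine (norm_sub_le _ _).trans ?_
    rw [exp_norm1, exp_norm1]; norm_num
  have h2 : ‖Complex.exp (-Complex.I * k * x) - Complex.exp (-Complex.I * k * y)‖ ≤ |k| * |x - y| := by
    have e : Complex.exp (-Complex.I * k * x) - Complex.exp (-Complex.I * k * y) =
      Complex.exp (-Complex.I * k * y) * (Complex.exp (Complex.I * ((-(k * (x - y)) : ℝ) : ℂ)) - 1) := by
      rw [mul_sub, ← Complex.exp_add]; push_cast; ring_nf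
    rw [e, norm_mul, exp_norm1, one_mul]
    refine (Real.norm_exp_I_mul_ofReal_sub_one_le).trans ?_
    rw [Real.norm_eq_abs, abs_neg, abs_mul]
  set a := |k| * |x - y| with ha
  have ha0 : 0 ≤ a := by positivity
  rcases le_total a 1 with h | h
  · have : a ≤ √a := Real.le_sqrt_of_sq_le (by nlinarith)
    linarith [Real.sqrt_nonneg a]
  · have : 1 ≤ √a := Real.one_le_sqrt.2 h
    linarith

lemma moll_diff (α : ℝ) (x₀ : ℝ) (W : ℝ → ℝ) (hWi : Integrable W) (hWnn : ∀ x, 0 ≤ W x)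
    (hWint : (∫ x : ℝ, W x) = 1) (R : ℝ) (hR : ∀ y, W y ≠ 0 → |y| ≤ R)
    (ε : ℝ) (hε : 0 < ε) (k : ℝ) :
    ‖deltaFT α x₀ k - mollPotFT α W x₀ ε k‖ ≤
      |α| * (√(2 * Real.pi))⁻¹ * (2 * √(ε * R) * √|k|) := by
  rw [moll_eq _ _ _ _ _ hε, deltaFT, mul_assoc, ← mul_sub, ← mul_sub, norm_mul, norm_mul, norm_inv,
    Complex.norm_real, Complex.norm_real, Real.norm_eq_abs, Real.norm_eq_abs,
    abs_of_nonneg (Real.sqrt_nonneg _), ← mul_assoc]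
  gcongr
  have hWi' : Integrable (fun y => (W y : ℂ)) := hWi.ofReal
  have e1 : Complex.exp (-Complex.I * k * x₀) = ∫ y, (W y : ℂ) * Complex.exp (-Complex.I * k * x₀) := by
    rw [integral_mul_const, integral_complex_ofReal, hWint]; simp
  have hi : Integrable (fun y => (W y : ℂ) * Complex.exp (-Complex.I * k * (x₀ + ε * y : ℝ))) := by
    refine hWi'.mul_bdd (c := 1) (by fun_prop) (Eventually.of_forall fun y => ?_)
    rw [exp_norm1]
  rw [e1, ← integral_sub (hWi'.mul_const _) hi]
  calc _ ≤ ∫ y, W y * (2 * √(ε * R) * √|k|) := by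
        refine norm_integral_le_of_norm_le (hWi.mul_const _) (Eventually.of_forall fun y => ?_)
        rw [← mul_sub, norm_mul, Complex.norm_real, Real.norm_eq_abs, abs_of_nonneg (hWnn y)]
        by_cases hy : W y = 0
        · simp [hy]
        · gcongr
          · exact hWnn y
          refine (exp_diff k x₀ (x₀ + ε * y)).trans ?_
          rw [mul_assoc, ← Real.sqrt_mul' _ (abs_nonneg k)]
          have : |x₀ - (x₀ + ε * y)| = ε * |y| := by
            rw [sub_add_cancel_left, abs_neg, abs_mul, abs_of_pos hε]
          rw [this, mul_comm |k|]
          gcongr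
          exact hR y hy
    _ = _ := by rw [integral_mul_const, hWint, one_mul]

lemma moll_norm (α : ℝ) (x₀ : ℝ) (W : ℝ → ℝ) (hWi : Integrable W) (hWnn : ∀ x, 0 ≤ W x)
    (hWint : (∫ x : ℝ, W x) = 1) (ε : ℝ) (hε : 0 < ε) (k : ℝ) :
    ‖mollPotFT α W x₀ ε k‖ ≤ |α| * (√(2 * Real.pi))⁻¹ := by
  rw [moll_eq _ _ _ _ _ hε, norm_mul, norm_mul, norm_inv,
    Complex.norm_real, Complex.norm_real, Real.norm_eq_abs, Real.norm_eq_abs,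
    abs_of_nonneg (Real.sqrt_nonneg _), ← mul_assoc]
  refine mul_le_of_le_one_right (by positivity) ?_
  calc _ ≤ ∫ y, W y := by
        refine norm_integral_le_of_norm_le hWi (Eventually.of_forall fun y => ?_)
        rw [norm_mul, Complex.norm_real, exp_norm1, mul_one, Real.norm_eq_abs, abs_of_nonneg (hWnn y)]
    _ ≤ _ := hWint.le

lemma delta_norm (α : ℝ) (x₀ k : ℝ) : ‖deltaFT α x₀ k‖ ≤ |α| * (√(2 * Real.pi))⁻¹ := by
  rw [deltaFT, norm_mul, exp_norm1, norm_mul, norm_inv,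
    Complex.norm_real, Complex.norm_real, Real.norm_eq_abs, Real.norm_eq_abs,
    abs_of_nonneg (Real.sqrt_nonneg _), mul_one]

lemma moll_meas (α : ℝ) (x₀ : ℝ) (W : ℝ → ℝ) (hWc : Continuous W) (ε : ℝ) :
    Measurable (mollPotFT α W x₀ ε) := by
  unfold mollPotFT
  refine measurable_const.mul (measurable_const.mul ?_)
  refine (StronglyMeasurable.integral_prod_right (f := fun (p x : ℝ) =>
    ((ε⁻¹ * W ((x - x₀) / ε) : ℝ) : ℂ) * Complex.exp (-Complex.I * p * x)) ?_).measurable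
  refine Continuous.stronglyMeasurable ?_
  unfold Function.uncurry; fun_prop

/-- Uniform-in-`p` convergence of row `L¹`-norms in the proof of Theorem 3.1: for each
`n ≥ 1` (`dysonKernel · (n-1)` being `K_{·,n}`) and each `t`,
`sup_p ∫ |K_{t,n}[v_α](p,q) − K_{t,n}[v_ε](p,q)| dq → 0` as `ε → 0⁺`. -/
theorem dysonKernel_delta_sup_L1_tendsto (α : ℝ) (hα : α ≠ 0) (x₀ : ℝ)
    (W : ℝ → ℝ) (hWc : Continuous W) (hWs : HasCompactSupport W)
    (hWnn : ∀ x, 0 ≤ W x) (hWint : (∫ x : ℝ, W x) = 1) :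
    ∀ n : ℕ, ∀ t : ℝ, Tendsto
      (fun ε : ℝ => ⨆ p : ℝ, ∫⁻ q : ℝ,
        (‖dysonKernel (deltaFT α x₀) n t p q -
            dysonKernel (mollPotFT α W x₀ ε) n t p q‖₊ : ENNReal))
      (𝓝[>] 0) (𝓝 0) := by
  intro n t
  obtain ⟨S, hS⟩ := N_bound n
  have hN : ∀ p m, ∫⁻ y, NN p m y ≠ ∞ := by
    intro p m
    obtain ⟨S', hS'⟩ := N_bound m
    exact ((hS' p).trans_lt ENNReal.coe_lt_top).ne
  have hWi : Integrable W := hWc.integrable_of_hasCompactSupport hWs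
  obtain ⟨R, hR⟩ : ∃ R, ∀ y, W y ≠ 0 → |y| ≤ R := by
    obtain ⟨R, hR⟩ := hWs.isCompact.isBounded.exists_norm_le
    exact ⟨R, fun y hy => hR y (subset_tsupport W hy)⟩
  set c : ℝ := (√(2 * Real.pi)) with hc
  have hc0 : 0 < c := by positivity
  set A : ℝ≥0 := (|α| * c⁻¹ / c).toNNReal with hAdef
  set d : ℝ → ℝ≥0 := fun ε => (|α| * c⁻¹ * (2 * √(ε * R)) / c).toNNReal with hd
  have hnc : ‖(c : ℂ)‖ = c := by rw [Complex.norm_real, Real.norm_eq_abs, abs_of_pos hc0]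
  have key : ∀ ε, 0 < ε → (⨆ p : ℝ, ∫⁻ q : ℝ,
        (‖dysonKernel (deltaFT α x₀) n t p q -
            dysonKernel (mollPotFT α W x₀ ε) n t p q‖₊ : ENNReal)) ≤
      d ε * (cD A (Real.nnabs t) n * S) := by
    intro ε hε
    refine iSup_le (fun p => ?_)
    have hu : Measurable (fun k => deltaFT α x₀ k / (c : ℂ)) := by
      unfold deltaFT; fun_prop
    have hv : Measurable (fun k => mollPotFT α W x₀ ε k / (c : ℂ)) :=
      (moll_meas α x₀ W hWc ε).div_const _
    have hA : ∀ k, ‖deltaFT α x₀ k / (c : ℂ)‖ₑ ≤ A := by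
      intro k
      rw [← ofReal_norm, norm_div, hnc]
      apply ENNReal.ofReal_le_ofReal
      gcongr
      exact delta_norm α x₀ k
    have hA' : ∀ k, ‖mollPotFT α W x₀ ε k / (c : ℂ)‖ₑ ≤ A := by
      intro k
      rw [← ofReal_norm, norm_div, hnc]
      apply ENNReal.ofReal_le_ofReal
      gcongr
      exact moll_norm α x₀ W hWi hWnn hWint ε hε k
    have hδ : ∀ x y : ℝ, ‖deltaFT α x₀ (x - y) / (c : ℂ) - mollPotFT α W x₀ ε (x - y) / (c : ℂ)‖ₑ
        ≤ d ε * ww x y := by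
      intro x y
      have : (d ε : ENNReal) = ENNReal.ofReal (|α| * c⁻¹ * (2 * √(ε * R)) / c) := rfl
      rw [this, ww, ← ENNReal.ofReal_mul (by positivity), ← sub_div, ← ofReal_norm, norm_div, hnc]
      apply ENNReal.ofReal_le_ofReal
      have h1 := moll_diff α x₀ W hWi hWnn hWint R hR ε hε (x - y)
      calc _ ≤ |α| * c⁻¹ * (2 * √(ε * R) * √|x - y|) / c := by gcongr
        _ = (|α| * c⁻¹ * (2 * √(ε * R)) / c) * √|x - y| := by ring
        _ ≤ _ := by gcongr; linarith
    have hD := diff_bd hu hv (p := p) hA hA' hδ (hN p) (Real.nnabs t) n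
    have hPu := PP.all hu hA (hN p) n
    have hPv := PP.all hv hA' (hN p) n
    calc _ ≤ ∫⁻ q, d ε * (cD A (Real.nnabs t) n * NN p n q) := by
          refine lintegral_mono (fun q => ?_)
          simp only [dyson_eq]
          have := hD t q q (by simp)
          rw [← hPu.diag, ← hPv.diag, ww_self, mul_one] at this
          exact this
      _ = d ε * (cD A (Real.nnabs t) n * ∫⁻ q, NN p n q) := by
          rw [lintegral_const_mul' _ _ (by finiteness), lintegral_const_mul' _ _ (by finiteness)]
      _ ≤ _ := by gcongr; exact hS p
  have hlim : Tendsto (fun ε => (d ε : ENNReal) * (cD A (Real.nnabs t) n * S)) (𝓝[>] 0) (𝓝 0) := by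
    have hcont : Continuous d := by
      simp only [hd]; fun_prop
    have h1 : Tendsto d (𝓝[>] 0) (𝓝 0) := by
      have := (hcont.tendsto 0).mono_left (nhdsWithin_le_nhds (s := Set.Ioi 0))
      simpa [hd] using this
    have h2 : Tendsto (fun ε => d ε * (cD A (Real.nnabs t) n * S)) (𝓝[>] 0) (𝓝 0) := by
      simpa using h1.mul_const (cD A (Real.nnabs t) n * S)
    have h3 := ENNReal.tendsto_coe.2 h2
    simpa using h3
  refine tendsto_of_tendsto_of_tendsto_of_le_of_le' tendsto_const_nhds hlim
    (Eventually.of_forall fun _ => zero_le) ?_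
  filter_upwards [self_mem_nhdsWithin] with ε hε
  exact key ε hε
end

section
/- Let N ∈ ℕ, let α₁, …, α_N ∈ ℝ \ {0}, let x₁, …, x_N ∈ ℝ be pairwise distinct, and let W₁, …, W_N : ℝ → ℝ be continuous, compactly supported, nonnegative, each with ∫_ℝ W_m(x) dx = 1. Set v(p) = (2π)^{-1/2} Σ_{m=1}^N α_m e^{−ipx_m} and v_ε(p) = Σ_{m=1}^N α_m (2π)^{-1/2} ∫_ℝ ε⁻¹ W_m((x − x_m)/ε) e^{−ipx} dx. Then for every t ∈ ℝ and p ∈ ℝ, the integrals ∫_ℝ |φ_t(p,q)| · |v(p−q) − v_ε(p−q)| dq converge to 0 as ε → 0⁺. -/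
open MeasureTheory Filter Topology

lemma phiK_measurable (t p : ℝ) : Measurable (fun q => phiK t p q) := by
  unfold phiK
  refine Measurable.ite ?_ (by fun_prop) (by fun_prop)
  exact measurableSet_eq_fun (by fun_prop) (by fun_prop)

lemma phiK_bound (t p q : ℝ) :
    ‖phiK t p q‖ ≤ (4 + |t| * (2 * p ^ 2 + 2)) * (1 + q ^ 2)⁻¹ := by
  have hq : 0 < 1 + q ^ 2 := by positivity
  have key : ∀ r : ℝ, Complex.exp (Complex.I * t * ((p : ℂ) ^ 2 - (q : ℂ) ^ 2)) =
      Complex.exp (Complex.I * ((t * (p ^ 2 - q ^ 2) : ℝ) : ℂ)) := by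
    intro r; congr 1; push_cast; ring
  have hn : ‖Complex.I * ((p : ℂ) ^ 2 - (q : ℂ) ^ 2)‖ = |p ^ 2 - q ^ 2| := by
    rw [norm_mul, Complex.norm_I, one_mul, ← Complex.ofReal_pow, ← Complex.ofReal_pow,
      ← Complex.ofReal_sub, Complex.norm_real, Real.norm_eq_abs]
  have h1 : ‖phiK t p q‖ ≤ |t| := by
    unfold phiK
    split_ifs with h
    · simp
    · have h0 : 0 < |p ^ 2 - q ^ 2| := abs_pos.mpr (sub_ne_zero.mpr h)
      rw [norm_div, hn, div_le_iff₀ h0, key 0, ← abs_mul]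
      exact Real.norm_exp_I_mul_ofReal_sub_one_le
  rw [← div_eq_mul_inv, le_div_iff₀ hq]
  by_cases hc : q ^ 2 ≤ 2 * p ^ 2 + 1
  · have := mul_le_mul h1 (show 1 + q ^ 2 ≤ 2 * p ^ 2 + 2 by linarith) hq.le (abs_nonneg t)
    linarith
  · push Not at hc
    have hne : ¬ p ^ 2 = q ^ 2 := by intro h; nlinarith [sq_nonneg p]
    have h0 : 0 < |p ^ 2 - q ^ 2| := abs_pos.mpr (sub_ne_zero.mpr hne)
    have habs : |p ^ 2 - q ^ 2| = q ^ 2 - p ^ 2 := by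
      rw [abs_of_nonpos] <;> nlinarith [sq_nonneg p]
    have h2 : ‖phiK t p q‖ ≤ 2 / (q ^ 2 - p ^ 2) := by
      unfold phiK
      rw [if_neg hne, norm_div, hn, key 0, habs]
      rw [habs] at h0
      gcongr
      refine (norm_sub_le _ _).trans ?_
      rw [Complex.norm_exp_I_mul_ofReal]; norm_num
    rw [habs] at h0
    rw [le_div_iff₀ h0] at h2
    have h3 : 0 ≤ |t| * (2 * p ^ 2 + 2) := by positivity
    nlinarith [norm_nonneg (phiK t p q)]

lemma norm_exp_aux (a b : ℝ) : ‖Complex.exp (-Complex.I * (a : ℂ) * (b : ℂ))‖ = 1 := by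
  have : -Complex.I * (a : ℂ) * (b : ℂ) = Complex.I * ((-(a * b) : ℝ) : ℂ) := by
    push_cast; ring
  rw [this, Complex.norm_exp_I_mul_ofReal]

lemma G_cont (p x : ℝ) (W : ℝ → ℝ) (hWc : Continuous W) (hWi : Integrable W) :
    Continuous (fun z : ℝ × ℝ => ∫ y : ℝ, (W y : ℂ) *
      Complex.exp (-Complex.I * ((p - z.2 : ℝ) : ℂ) * ((x + z.1 * y : ℝ) : ℂ))) := by
  refine continuous_of_dominated (bound := fun y => ‖W y‖) ?_ ?_ hWi.norm ?_
  · intro z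
    exact (by fun_prop : Continuous _).aestronglyMeasurable
  · intro z
    refine Eventually.of_forall fun y => ?_
    rw [norm_mul, norm_exp_aux, mul_one, Complex.norm_real]
  · refine Eventually.of_forall fun y => ?_
    fun_prop

lemma G_bound (k x ε : ℝ) (W : ℝ → ℝ) (h0 : ∀ y, 0 ≤ W y) (h1 : ∫ y, W y = 1) :
    ‖∫ y : ℝ, (W y : ℂ) *
      Complex.exp (-Complex.I * (k : ℂ) * ((x + ε * y : ℝ) : ℂ))‖ ≤ 1 := by
  refine (norm_integral_le_integral_norm _).trans ?_
  rw [← h1]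
  refine le_of_eq (integral_congr_ae (Eventually.of_forall fun y => ?_))
  simp only []
  rw [norm_mul, norm_exp_aux, mul_one, Complex.norm_real, Real.norm_of_nonneg (h0 y)]

lemma G_subst (k x ε : ℝ) (hε : 0 < ε) (W : ℝ → ℝ) :
    (∫ y : ℝ, ((ε⁻¹ * W ((y - x) / ε) : ℝ) : ℂ) * Complex.exp (-Complex.I * (k : ℂ) * y)) =
    ∫ y : ℝ, (W y : ℂ) * Complex.exp (-Complex.I * (k : ℂ) * ((x + ε * y : ℝ) : ℂ)) := by
  set f : ℝ → ℂ := fun y => ((ε⁻¹ * W ((y - x) / ε) : ℝ) : ℂ) *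
    Complex.exp (-Complex.I * (k : ℂ) * y) with hf
  have a1 : ∫ y, f (y + x) = ∫ y, f y := integral_add_right_eq_self f x
  have a2 := Measure.integral_comp_mul_left (fun y => f (y + x)) ε
  rw [a1, abs_of_pos (inv_pos.mpr hε)] at a2
  have a3 : (∫ y, f y) = ε • ∫ y, f (ε * y + x) := by
    rw [a2, smul_smul, mul_inv_cancel₀ hε.ne', one_smul]
  rw [a3, ← integral_smul]
  refine integral_congr_ae (Eventually.of_forall fun y => ?_)
  have e1 : (ε * y + x - x) / ε = y := by field_simp; ring
  have e2 : (ε : ℂ) ≠ 0 := by exact_mod_cast hε.ne'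
  simp only [hf, e1, Complex.real_smul]
  push_cast
  rw [← mul_assoc, ← mul_assoc, mul_inv_cancel₀ e2, one_mul, add_comm (x : ℂ)]

/-- Base case of the induction proving Theorem 3.3 (finitely many fixed-center point
interactions): with `v` the Fourier transform of `Σ αₘ δ(· − xₘ)` and `v_ε` that of its
mollification, `∫ |φ_t(p,q)| · |v(p−q) − v_ε(p−q)| dq → 0` as `ε → 0⁺`. -/
theorem finitely_many_centers_base_case (N : ℕ) (α : Fin N → ℝ) (hα : ∀ m, α m ≠ 0)
    (x : Fin N → ℝ) (hx : Function.Injective x)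
    (W : Fin N → ℝ → ℝ) (hWc : ∀ m, Continuous (W m))
    (hWs : ∀ m, HasCompactSupport (W m)) (hWnn : ∀ m y, 0 ≤ W m y)
    (hWint : ∀ m, (∫ y : ℝ, W m y) = 1) :
    ∀ t p : ℝ, Tendsto
      (fun ε : ℝ => ∫⁻ q : ℝ, (‖phiK t p q‖₊ : ENNReal) *
        (‖(((Real.sqrt (2 * Real.pi) : ℝ) : ℂ)⁻¹ *
              ∑ m : Fin N, (α m : ℂ) * Complex.exp (-Complex.I * (p - q) * x m)) -
            ∑ m : Fin N, (α m : ℂ) * (((Real.sqrt (2 * Real.pi) : ℝ) : ℂ)⁻¹ *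
              ∫ y : ℝ, ((ε⁻¹ * W m ((y - x m) / ε) : ℝ) : ℂ) *
                Complex.exp (-Complex.I * (p - q) * y))‖₊ : ENNReal))
      (𝓝[>] 0) (𝓝 0) := by
  intro t p
  set c : ℂ := ((Real.sqrt (2 * Real.pi) : ℝ) : ℂ)⁻¹ with hc
  have hWi : ∀ m, Integrable (W m) := fun m => (hWc m).integrable_of_hasCompactSupport (hWs m)
  let G : Fin N → ℝ × ℝ → ℂ := fun m z => ∫ y : ℝ, (W m y : ℂ) *
      Complex.exp (-Complex.I * ((p - z.2 : ℝ) : ℂ) * ((x m + z.1 * y : ℝ) : ℂ))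
  let D : ℝ × ℝ → ℂ := fun z =>
    (c * ∑ m : Fin N, (α m : ℂ) * Complex.exp (-Complex.I * ((p - z.2 : ℝ) : ℂ) * x m)) -
      ∑ m : Fin N, (α m : ℂ) * (c * G m z)
  have hG : ∀ m, Continuous (G m) := fun m => G_cont p (x m) (W m) (hWc m) (hWi m)
  have hD : Continuous D := by fun_prop
  have hD0 : ∀ q, D (0, q) = 0 := by
    intro q
    have : ∀ m, G m (0, q) = Complex.exp (-Complex.I * ((p - q : ℝ) : ℂ) * x m) := by
      intro m
      simp only [G, zero_mul, add_zero]
      rw [integral_mul_const, integral_complex_ofReal, hWint m]; simp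
    simp only [D, this, Finset.mul_sum]
    rw [sub_eq_zero]
    exact Finset.sum_congr rfl fun m _ => by ring
  let B : ℝ := ‖c‖ * (∑ m, |α m|) + ∑ m, |α m| * ‖c‖
  have hB : ∀ z, ‖D z‖ ≤ B := by
    intro z
    refine (norm_sub_le _ _).trans (add_le_add ?_ ?_)
    · rw [norm_mul]
      gcongr
      refine (norm_sum_le _ _).trans (Finset.sum_le_sum fun m _ => ?_)
      rw [norm_mul, norm_exp_aux, mul_one, Complex.norm_real, Real.norm_eq_abs]
    · refine (norm_sum_le _ _).trans (Finset.sum_le_sum fun m _ => ?_)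
      rw [norm_mul, norm_mul, Complex.norm_real, Real.norm_eq_abs]
      have := G_bound (p - z.2) (x m) z.1 (W m) (hWnn m) (hWint m)
      gcongr
      exact mul_le_of_le_one_right (norm_nonneg _) this
  have hmain : Tendsto (fun ε : ℝ => ∫⁻ q : ℝ, (‖phiK t p q‖₊ : ENNReal) *
      (‖D (ε, q)‖₊ : ENNReal)) (𝓝[>] 0) (𝓝 (∫⁻ q : ℝ, 0)) := by
    refine tendsto_lintegral_filter_of_dominated_convergence
      (fun q => ENNReal.ofReal ((4 + |t| * (2 * p ^ 2 + 2)) * (1 + q ^ 2)⁻¹ * B)) ?_ ?_ ?_ ?_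
    · refine Eventually.of_forall fun ε => ?_
      have h1 := phiK_measurable t p
      have h2 : Measurable (fun q => D (ε, q)) := (by fun_prop : Continuous _).measurable
      exact (h1.nnnorm.coe_nnreal_ennreal).mul (h2.nnnorm.coe_nnreal_ennreal)
    · refine Eventually.of_forall fun ε => Eventually.of_forall fun q => ?_
      have e : (‖phiK t p q‖₊ : ENNReal) * (‖D (ε, q)‖₊ : ENNReal) =
          ENNReal.ofReal (‖phiK t p q‖ * ‖D (ε, q)‖) := by
        rw [ENNReal.ofReal_mul (norm_nonneg _), ofReal_norm, ofReal_norm]; rfl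
      rw [e]
      exact ENNReal.ofReal_le_ofReal (mul_le_mul (phiK_bound t p q) (hB _) (norm_nonneg _)
        (by positivity))
    · have : Integrable (fun q : ℝ => (4 + |t| * (2 * p ^ 2 + 2)) * (1 + q ^ 2)⁻¹ * B) :=
        (integrable_inv_one_add_sq.const_mul _).mul_const _
      exact this.lintegral_lt_top.ne
    · refine Eventually.of_forall fun q => ?_
      have h1 : Tendsto (fun ε : ℝ => (‖D (ε, q)‖₊ : ENNReal)) (𝓝[>] 0) (𝓝 0) := by
        have h2 : Continuous (fun ε : ℝ => (‖D (ε, q)‖₊ : ENNReal)) :=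
          ENNReal.continuous_coe.comp (by fun_prop)
        have h3 := h2.tendsto 0
        simp only [hD0, nnnorm_zero, ENNReal.coe_zero] at h3
        exact h3.mono_left nhdsWithin_le_nhds
      have := ENNReal.Tendsto.const_mul (a := (‖phiK t p q‖₊ : ENNReal)) h1
        (Or.inr ENNReal.coe_ne_top)
      simpa using this
  rw [lintegral_zero] at hmain
  refine hmain.congr' ?_
  filter_upwards [self_mem_nhdsWithin] with ε hε
  refine lintegral_congr fun q => ?_
  simp only [D, G]
  simp_rw [← G_subst (p - q) _ ε hε, Complex.ofReal_sub]
end
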